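/- Triangle: For all metrics mA, mB ∈ {diff, disc, bot, top}, all real numbers r1, r2, r3, and all extended real bounds qA, qB, if r1 ∼_{mA}^{qA} r2 and r2 ∼_{mB}^{qB} r3, then r1 ∼_{mA ⊔ mB}^{qA + qB} r3, where mA ⊔ mB is the join of the two metrics. -/

import Mathlib

/-- Metrics: `diff` (absolute difference), `disc` (discrete), `bot`, `top`. -/
inductive Metric : Type
  | diff | disc | bot | top
  deriving DecidableEq

/-- The join (least upper bound) of two metrics in the order generated by
`bot ⊑ diff ⊑ top` and `bot ⊑ disc ⊑ top`. -/
def Metric.join : Metric → Metric → Metric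
  | .bot, m => m
  | m, .bot => m
  | .diff, .diff => .diff
  | .disc, .disc => .disc
  | _, _ => .top

/-- The distance relation `r1 ∼_m^q r2` on reals, with extended real bound `q`. -/
def DistRel (m : Metric) (q : EReal) (r1 r2 : ℝ) : Prop :=
  match m with
  | .diff => ((|r1 - r2| : ℝ) : EReal) ≤ q
  | .disc => (r1 = r2 → (0 : EReal) ≤ q) ∧ (r1 ≠ r2 → (1 : EReal) ≤ q)
  | .bot  => (((|r1 - r2| : ℝ) : EReal) ≤ q) ∧
             ((r1 = r2 → (0 : EReal) ≤ q) ∧ (r1 ≠ r2 → (1 : EReal) ≤ q))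
  | .top  => (((|r1 - r2| : ℝ) : EReal) ≤ q) ∨
             ((r1 = r2 → (0 : EReal) ≤ q) ∧ (r1 ≠ r2 → (1 : EReal) ≤ q))

theorem aux_diff {r1 r2 r3 : ℝ} {qA qB : EReal}
    (hA : ((|r1 - r2| : ℝ) : EReal) ≤ qA) (hB : ((|r2 - r3| : ℝ) : EReal) ≤ qB) :
    ((|r1 - r3| : ℝ) : EReal) ≤ qA + qB := by
  refine le_trans ?_ (add_le_add hA hB)
  rw [← EReal.coe_add]
  exact EReal.coe_le_coe_iff.2 (abs_sub_le r1 r2 r3)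

theorem aux_nonneg {r1 r2 : ℝ} {q : EReal}
    (h : (r1 = r2 → (0 : EReal) ≤ q) ∧ (r1 ≠ r2 → (1 : EReal) ≤ q)) : 0 ≤ q := by
  by_cases e : r1 = r2
  · exact h.1 e
  · exact zero_le_one.trans (h.2 e)

theorem aux_nonneg_diff {r1 r2 : ℝ} {q : EReal}
    (h : ((|r1 - r2| : ℝ) : EReal) ≤ q) : 0 ≤ q :=
  le_trans (by exact_mod_cast abs_nonneg (r1 - r2)) h

/-- A sum of two nonnegative bounds, one of which is at least one when needed. -/
theorem aux_disc_of {r1 r3 : ℝ} {qA qB : EReal} (hA : 0 ≤ qA) (hB : 0 ≤ qB)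
    (h : r1 ≠ r3 → 1 ≤ qA ∨ 1 ≤ qB) :
    (r1 = r3 → (0 : EReal) ≤ qA + qB) ∧ (r1 ≠ r3 → (1 : EReal) ≤ qA + qB) := by
  refine ⟨fun _ => add_nonneg hA hB, fun e => ?_⟩
  rcases h e with h | h
  · exact h.trans (le_add_of_nonneg_right hB)
  · exact h.trans (le_add_of_nonneg_left hA)

theorem aux_disc {r1 r2 r3 : ℝ} {qA qB : EReal}
    (hA : (r1 = r2 → (0 : EReal) ≤ qA) ∧ (r1 ≠ r2 → (1 : EReal) ≤ qA))
    (hB : (r2 = r3 → (0 : EReal) ≤ qB) ∧ (r2 ≠ r3 → (1 : EReal) ≤ qB)) :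
    (r1 = r3 → (0 : EReal) ≤ qA + qB) ∧ (r1 ≠ r3 → (1 : EReal) ≤ qA + qB) := by
  refine aux_disc_of (aux_nonneg hA) (aux_nonneg hB) fun e => ?_
  by_cases e1 : r1 = r2
  · exact Or.inr (hB.2 (e1 ▸ e))
  · exact Or.inl (hA.2 e1)

theorem aux_diff_disc {r1 r2 r3 : ℝ} {qA qB : EReal}
    (hA : ((|r1 - r2| : ℝ) : EReal) ≤ qA)
    (hB : (r2 = r3 → (0 : EReal) ≤ qB) ∧ (r2 ≠ r3 → (1 : EReal) ≤ qB)) :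
    (((|r1 - r3| : ℝ) : EReal) ≤ qA + qB) ∨
    ((r1 = r3 → (0 : EReal) ≤ qA + qB) ∧ (r1 ≠ r3 → (1 : EReal) ≤ qA + qB)) := by
  by_cases e : r2 = r3
  · left
    subst e
    exact hA.trans (le_add_of_nonneg_right (hB.1 rfl))
  · right
    exact aux_disc_of (aux_nonneg_diff hA) (aux_nonneg hB) fun _ => Or.inr (hB.2 e)

theorem aux_disc_diff {r1 r2 r3 : ℝ} {qA qB : EReal}
    (hA : (r1 = r2 → (0 : EReal) ≤ qA) ∧ (r1 ≠ r2 → (1 : EReal) ≤ qA))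
    (hB : ((|r2 - r3| : ℝ) : EReal) ≤ qB) :
    (((|r1 - r3| : ℝ) : EReal) ≤ qA + qB) ∨
    ((r1 = r3 → (0 : EReal) ≤ qA + qB) ∧ (r1 ≠ r3 → (1 : EReal) ≤ qA + qB)) := by
  by_cases e : r1 = r2
  · left
    subst e
    exact hB.trans (le_add_of_nonneg_left (hA.1 rfl))
  · right
    exact aux_disc_of (aux_nonneg hA) (aux_nonneg_diff hB) fun _ => Or.inl (hA.2 e)

/-- Triangle: if `r1 ∼_{mA}^{qA} r2` and `r2 ∼_{mB}^{qB} r3`, then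
`r1 ∼_{mA ⊔ mB}^{qA + qB} r3`. -/
theorem triangle (mA mB : Metric) (r1 r2 r3 : ℝ) (qA qB : EReal)
    (hA : DistRel mA qA r1 r2) (hB : DistRel mB qB r2 r3) :
    DistRel (mA.join mB) (qA + qB) r1 r3 := by
  cases mA <;> cases mB <;> simp only [DistRel, Metric.join] at hA hB ⊢
  · exact aux_diff hA hB
  · exact aux_diff_disc hA hB
  · exact aux_diff hA hB.1
  · exact hB.elim (fun h => Or.inl (aux_diff hA h)) (aux_diff_disc hA)
  · exact aux_disc_diff hA hB
  · exact aux_disc hA hB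
  · exact aux_disc hA hB.2
  · exact hB.elim (aux_disc_diff hA) (fun h => Or.inr (aux_disc hA h))
  · exact aux_diff hA.1 hB
  · exact aux_disc hA.2 hB
  · exact ⟨aux_diff hA.1 hB.1, aux_disc hA.2 hB.2⟩
  · exact hB.imp (aux_diff hA.1) (aux_disc hA.2)
  · exact hA.elim (fun h => Or.inl (aux_diff h hB)) (fun h => aux_disc_diff h hB)
  · exact hA.elim (fun h => aux_diff_disc h hB) (fun h => Or.inr (aux_disc h hB))
  · exact hA.imp (fun h => aux_diff h hB.1) (fun h => aux_disc h hB.2)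
  · rcases hA with hA | hA <;> rcases hB with hB | hB
    · exact Or.inl (aux_diff hA hB)
    · exact aux_diff_disc hA hB
    · exact aux_disc_diff hA hB
    · exact Or.inr (aux_disc hA hB)
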